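/- Let w₀ be any word over Ω and let σ be the folding morphism determined by w₀. Then for every word u over Ω, σ applied to the reverse-complement of u equals the reverse-complement of σ(u). -/

import Mathlib

/-!
Reverse-complement is an anti-automorphism of the monoid of words and the folding morphism is a
homomorphism, so `u ↦ σ (revComp u)` and `u ↦ revComp (σ u)` are both anti-homomorphisms. They
therefore agree as soon as they agree on single letters (`foldMorph_revComp_singleton`): on `A`
this is the definition of `σ(B)`, on `B` it is the involutivity of `revComp`, and on the signs it
is immediate.
-/

/-- The folding alphabet Ω = {A, B, +, -}. -/
inductive OmegaLetter : Type
  | A | B | plus | minus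
deriving DecidableEq

/-- The complement involution ~ on Ω: ~A = B, ~B = A, ~+ = -, ~- = +. -/
def OmegaLetter.compl : OmegaLetter → OmegaLetter
  | .A => .B
  | .B => .A
  | .plus => .minus
  | .minus => .plus

/-- The reverse-complement of a word: reverse of the letterwise complement. -/
def revComp (w : List OmegaLetter) : List OmegaLetter :=
  (w.map OmegaLetter.compl).reverse

/-- The folding morphism determined by `w0`: the monoid homomorphism on words with
σ(A) = w0, σ(B) = revComp w0, σ(+) = [+], σ(-) = [-]. -/
def foldMorph (w0 : List OmegaLetter) (u : List OmegaLetter) : List OmegaLetter :=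
  (u.map (fun x => match x with
    | OmegaLetter.A => w0
    | OmegaLetter.B => revComp w0
    | OmegaLetter.plus => [OmegaLetter.plus]
    | OmegaLetter.minus => [OmegaLetter.minus])).flatten

theorem OmegaLetter.compl_compl (x : OmegaLetter) : x.compl.compl = x := by
  cases x <;> rfl

theorem revComp_append (u v : List OmegaLetter) :
    revComp (u ++ v) = revComp v ++ revComp u := by
  simp [revComp]

theorem revComp_revComp (u : List OmegaLetter) : revComp (revComp u) = u := by
  simp [revComp, Function.comp_def, OmegaLetter.compl_compl]

theorem foldMorph_append (w0 u v : List OmegaLetter) :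
    foldMorph w0 (u ++ v) = foldMorph w0 u ++ foldMorph w0 v := by
  simp [foldMorph]

/-- The theorem on one-letter words. The case of `B` holds because `revComp` is an involution. -/
theorem foldMorph_revComp_singleton (w0 : List OmegaLetter) (x : OmegaLetter) :
    foldMorph w0 (revComp [x]) = revComp (foldMorph w0 [x]) := by
  have h := revComp_revComp w0
  cases x <;> simp_all [foldMorph, revComp, OmegaLetter.compl]

/-- σ applied to the reverse-complement of a word equals the reverse-complement of σ
applied to the word. -/
theorem foldMorph_revComp (w0 : List OmegaLetter) (u : List OmegaLetter) :
    foldMorph w0 (revComp u) = revComp (foldMorph w0 u) := by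
  induction u with
  | nil => rfl
  | cons x u ih =>
    rw [← List.singleton_append, revComp_append, foldMorph_append, foldMorph_append,
      revComp_append, ih, foldMorph_revComp_singleton]
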